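/- Assume α > 1, both λ and β are nondecreasing on [t₀,∞), b(t) > β'(t) + β(t)/t (equivalently w(t) > 0) for every t ≥ t₀, there exists ε ∈ (0, α−1) with (α−3)·w(t) − t·w'(t) ≥ ε·b(t) for every t ≥ t₀, ∫_{t₀}^{∞} [ λ'(t)²·t³·β(t)²/λ(t)⁴ − λ'(t)·t²·b(t)/(2·λ(t)²) ]_+ dt < +∞ (where [·]_+ denotes the positive part), and there exists C > 0 with (d/dt)(t²·b(t)) ≤ C·t·b(t) for every t ≥ t₀. Then t·√(b(t)·λ(t))·‖∇Φ_{λ(t)}(x(t))‖ → 0 as t → +∞, i.e. ‖∇Φ_{λ(t)}(x(t))‖ = o(1/(t·√(b(t)·λ(t)))). -/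

import Mathlib

open Set MeasureTheory Filter Real

noncomputable section

/-- Convexity for extended-real-valued functions. -/
def EConvexOn {H : Type*} [NormedAddCommGroup H] [NormedSpace ℝ H] (f : H → EReal) : Prop :=
  ∀ x y : H, ∀ a c : ℝ, 0 ≤ a → 0 ≤ c → a + c = 1 →
    f (a • x + c • y) ≤ (a : EReal) * f x + (c : EReal) * f y

/-- `p` is the proximal point of `f` with parameter `l` at `x`, i.e. the (unique) minimizer of
`y ↦ f y + ‖x - y‖² / (2l)`. -/
def IsProxPt {H : Type*} [NormedAddCommGroup H] [InnerProductSpace ℝ H]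
    (f : H → EReal) (l : ℝ) (x p : H) : Prop :=
  ∀ y : H, f p + ((‖x - p‖ ^ 2 / (2 * l) : ℝ) : EReal)
      ≤ f y + ((‖x - y‖ ^ 2 / (2 * l) : ℝ) : EReal)

/-- The Moreau envelope of `f` with parameter `l` (as a real number). -/
def moreau {H : Type*} [NormedAddCommGroup H] [InnerProductSpace ℝ H]
    (f : H → EReal) (l : ℝ) (x : H) : ℝ :=
  (⨅ y : H, f y + ((‖x - y‖ ^ 2 / (2 * l) : ℝ) : EReal)).toReal

/-!
Let `z` be a minimizer, `G` the gradient of the envelope along the trajectory and `f` its gap above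
the minimum. The mechanical energy `F = t² (b f + ‖x'‖² / 2)` dominates `t² b λ ‖G‖² / 2`, so it
suffices to show `F → 0`.

A Lyapunov function `E ≥ 0` satisfies `E' ≤ -(ε / 2) F / t`; in particular it bounds `‖x - z‖`, and
with it `λ ‖G‖`. Conversely `F' ≤ K F / t + (λ ‖G‖)² φ`, where `φ` is the integrand of the integral
condition and absorbs everything coming from the variation of `λ`. Adding `(2K / ε) E` cancels the
term `K F / t`, so `F` converges; its limit is zero because `E` is bounded below while `∫ dt / t`
diverges.
-/

open scoped Topology

lemma hasDerivAt_of_eventually_mem_Icc {f l u : ℝ → ℝ} {d t : ℝ} (hl : HasDerivAt l d t)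
    (hu : HasDerivAt u d t) (hlt : l t = f t) (hut : u t = f t)
    (hmem : ∀ᶠ s in 𝓝 t, f s ∈ Icc (l s) (u s)) : HasDerivAt f d t := by
  rw [hasDerivAt_iff_isLittleO] at *
  refine (Asymptotics.IsBigO.of_bound' ?_).trans_isLittleO (hl.norm_left.add hu.norm_left)
  filter_upwards [hmem] with s ⟨hls, hus⟩
  simp only [smul_eq_mul, norm_eq_abs, hlt, hut]
  calc |f s - f t - (s - t) * d|
      ≤ max |l s - f t - (s - t) * d| |u s - f t - (s - t) * d| :=
        abs_le_max_abs_abs (by linarith) (by linarith)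
    _ ≤ |l s - f t - (s - t) * d| + |u s - f t - (s - t) * d| :=
        max_le_add_of_nonneg (abs_nonneg _) (abs_nonneg _)
    _ ≤ _ := le_abs_self _

lemma exists_tendsto_of_antitoneOn_Ici {g : ℝ → ℝ} {a : ℝ} (hg : AntitoneOn g (Ici a))
    (hbdd : IsBoundedUnder (· ≥ ·) atTop g) : ∃ ℓ, Tendsto g atTop (𝓝 ℓ) := by
  have hext : (fun t => g (max t a)) =ᶠ[atTop] g := by
    filter_upwards [eventually_ge_atTop a] with t ht
    rw [max_eq_left ht]
  have hanti : Antitone fun t => g (max t a) := fun s t hst =>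
    hg (le_max_right s a) (le_max_right t a) (max_le_max_right a hst)
  rcases tendsto_atTop_of_antitone hanti with hbot | ⟨ℓ, hℓ⟩
  · exact (not_isBoundedUnder_of_tendsto_atBot (hbot.congr' hext) hbdd).elim
  · exact ⟨ℓ, hℓ.congr' hext⟩

lemma antitoneOn_sub_integral_of_deriv_le {g φ : ℝ → ℝ} {a : ℝ}
    (hg : ∀ t ≥ a, DifferentiableAt ℝ g t) (hφ : IntegrableOn φ (Ici a))
    (hle : ∀ t ≥ a, deriv g t ≤ φ t) : AntitoneOn (fun t => g t - ∫ s in a..t, φ s) (Ici a) := by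
  intro s (hs : a ≤ s) t (ht : a ≤ t) hst
  have hincr : g t - g s ≤ ∫ r in s..t, φ r :=
    intervalIntegral.sub_le_integral_of_hasDeriv_right_of_le hst
      (fun r hr => (hg r (hs.trans hr.1)).continuousAt.continuousWithinAt)
      (fun r hr => (hg r (hs.trans hr.1.le)).hasDerivAt.hasDerivWithinAt)
      (hφ.mono_set fun r hr => hs.trans hr.1) (fun r hr => hle r (hs.trans hr.1.le))
  have hφ_interval : ∀ r ≥ a, IntervalIntegrable φ volume a r := fun r hr =>
    (intervalIntegrable_iff_integrableOn_Icc_of_le hr).2 (hφ.mono_set Icc_subset_Ici_self)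
  have hsplit := intervalIntegral.integral_interval_sub_left (hφ_interval t ht) (hφ_interval s hs)
  simp only
  linarith

lemma exists_tendsto_of_deriv_le {g φ : ℝ → ℝ} (hg : ∀ᶠ t in atTop, DifferentiableAt ℝ g t)
    (hφ : IntegrableAtFilter φ atTop) (hle : ∀ᶠ t in atTop, deriv g t ≤ φ t)
    (hbdd : IsBoundedUnder (· ≥ ·) atTop g) : ∃ ℓ, Tendsto g atTop (𝓝 ℓ) := by
  obtain ⟨c, hφc⟩ := integrableAtFilter_atTop_iff.1 hφ
  obtain ⟨a, ha⟩ := ((hg.and hle).and (eventually_ge_atTop c)).exists_forall_of_atTop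
  have hφa : IntegrableOn φ (Ici a) := hφc.mono_set (Ici_subset_Ici.2 (ha a le_rfl).2)
  have hprim : Tendsto (fun t => ∫ s in a..t, φ s) atTop (𝓝 (∫ s in Ioi a, φ s)) :=
    intervalIntegral_tendsto_integral_Ioi a (hφa.mono_set Ioi_subset_Ici_self) tendsto_id
  obtain ⟨m, hm⟩ := exists_tendsto_of_antitoneOn_Ici
    (antitoneOn_sub_integral_of_deriv_le (fun t ht => (ha t ht).1.1) hφa fun t ht => (ha t ht).1.2)
    (by simpa only [sub_eq_add_neg, Pi.add_def, ge_iff_le] using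
      isBoundedUnder_ge_add hbdd hprim.neg.isBoundedUnder_ge)
  exact ⟨_, (hm.add hprim).congr fun t => sub_add_cancel _ _⟩

lemma exists_tendsto_of_deriv_nonpos {g : ℝ → ℝ} (hg : ∀ᶠ t in atTop, DifferentiableAt ℝ g t)
    (hle : ∀ᶠ t in atTop, deriv g t ≤ 0) (hbdd : IsBoundedUnder (· ≥ ·) atTop g) :
    ∃ ℓ, Tendsto g atTop (𝓝 ℓ) :=
  exists_tendsto_of_deriv_le hg integrableAtFilter_zero hle hbdd

lemma limit_nonpos_of_deriv_le_neg_div {E F : ℝ → ℝ} {ℓ : ℝ}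
    (hE : ∀ᶠ t in atTop, DifferentiableAt ℝ E t) (hbdd : IsBoundedUnder (· ≥ ·) atTop E)
    (hE' : ∀ᶠ t in atTop, deriv E t ≤ -(F t / t)) (hF : Tendsto F atTop (𝓝 ℓ)) : ℓ ≤ 0 := by
  by_contra! hℓ
  obtain ⟨B, hB⟩ := hbdd.eventually_ge
  have hlog : Tendsto (fun t => E t + ℓ / 2 * log t) atTop atTop :=
    tendsto_atTop_add_left_of_le' atTop B hB (tendsto_log_atTop.const_mul_atTop (half_pos hℓ))
  obtain ⟨m, hm⟩ : ∃ m, Tendsto (fun t => E t + ℓ / 2 * log t) atTop (𝓝 m) := by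
    refine exists_tendsto_of_deriv_nonpos ?_ ?_ hlog.isBoundedUnder_ge_atTop
    · filter_upwards [hE, eventually_gt_atTop 0] with t hEt ht
      exact hEt.add ((differentiableAt_log ht.ne').const_mul _)
    · filter_upwards [hE, hE', hF.eventually_const_le (half_lt_self hℓ), eventually_gt_atTop 0]
        with t hEt hE't hFt ht
      rw [deriv_fun_add hEt ((differentiableAt_log ht.ne').const_mul _), deriv_const_mul_field,
        deriv_log, ← div_eq_mul_inv]
      linarith [div_le_div_of_nonneg_right hFt ht.le]
  exact not_tendsto_nhds_of_tendsto_atTop hlog m hm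

lemma tendsto_zero_of_deriv_le_div {E F φ : ℝ → ℝ} {δ K : ℝ} (hδ : 0 < δ) (hK : 0 ≤ K)
    (hE : ∀ᶠ t in atTop, DifferentiableAt ℝ E t) (hF : ∀ᶠ t in atTop, DifferentiableAt ℝ F t)
    (hbdd : IsBoundedUnder (· ≥ ·) atTop E) (hF0 : ∀ᶠ t in atTop, 0 ≤ F t)
    (hφ : IntegrableAtFilter φ atTop) (hE' : ∀ᶠ t in atTop, deriv E t ≤ -(δ * (F t / t)))
    (hF' : ∀ᶠ t in atTop, deriv F t ≤ K * (F t / t) + φ t) : Tendsto F atTop (𝓝 0) := by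
  obtain ⟨e, he⟩ : ∃ e, Tendsto E atTop (𝓝 e) := by
    refine exists_tendsto_of_deriv_nonpos hE ?_ hbdd
    filter_upwards [hE', hF0, eventually_gt_atTop 0] with t hE't hFt ht
    exact hE't.trans (neg_nonpos.2 (by positivity))
  have hKE : Tendsto (fun t => K / δ * E t) atTop (𝓝 (K / δ * e)) := he.const_mul _
  obtain ⟨m, hm⟩ : ∃ m, Tendsto (fun t => F t + K / δ * E t) atTop (𝓝 m) := by
    refine exists_tendsto_of_deriv_le ?_ hφ ?_
      (isBoundedUnder_ge_add (isBoundedUnder_of_eventually_ge hF0) hKE.isBoundedUnder_ge)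
    · filter_upwards [hE, hF] with t hEt hFt using hFt.add (hEt.const_mul _)
    · filter_upwards [hE, hF, hE', hF'] with t hEt hFt hE't hF't
      rw [deriv_fun_add hFt (hEt.const_mul _), deriv_const_mul_field]
      have hcancel : K / δ * deriv E t ≤ -(K * (F t / t)) :=
        (mul_le_mul_of_nonneg_left hE't (by positivity)).trans_eq (by field_simp)
      linarith
  obtain ⟨ℓ, hℓ⟩ : ∃ ℓ, Tendsto F atTop (𝓝 ℓ) :=
    ⟨_, (hm.sub hKE).congr fun t => add_sub_cancel_right _ _⟩
  have hδℓ : δ * ℓ ≤ 0 := limit_nonpos_of_deriv_le_neg_div hE hbdd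
    (by simpa only [mul_div_assoc] using hE') (hℓ.const_mul δ)
  have hℓ0 : ℓ = 0 := le_antisymm (nonpos_of_mul_nonpos_right hδℓ hδ) (ge_of_tendsto hℓ hF0)
  rwa [hℓ0] at hℓ

lemma norm_sq_div_two_mul {E : Type*} [SeminormedAddCommGroup E] [NormedSpace ℝ E] {l : ℝ}
    (hl : l ≠ 0) (u : E) : ‖u‖ ^ 2 / (2 * l) = l / 2 * ‖l⁻¹ • u‖ ^ 2 := by
  rw [norm_smul, mul_pow, norm_eq_abs, sq_abs]
  field_simp

lemma aemeasurable_of_hasDerivAt {f f' : ℝ → ℝ} {s : Set ℝ} (hs : MeasurableSet s)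
    (hf : ∀ t ∈ s, HasDerivAt f (f' t) t) : AEMeasurable f' (volume.restrict s) := by
  refine (measurable_deriv f).aemeasurable.congr ?_
  filter_upwards [ae_restrict_mem hs] with t ht using (hf t ht).deriv

lemma integrable_max_zero_of_lintegral_ofReal_lt_top {Ω : Type*} [MeasurableSpace Ω]
    {μ : Measure Ω} {h : Ω → ℝ} (hh : AEMeasurable h μ)
    (hfin : ∫⁻ a, ENNReal.ofReal (h a) ∂μ < ⊤) : Integrable (fun a => max (h a) 0) μ := by
  simpa only [ENNReal.toReal_ofReal'] using
    integrable_toReal_of_lintegral_ne_top hh.ennreal_ofReal hfin.ne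

section Prox

variable {H : Type*} [NormedAddCommGroup H] [InnerProductSpace ℝ H] {Φ : H → EReal}

lemma inner_nonneg_of_hasDerivAt {g q : ℝ → H} {g' q' : H} {t : ℝ} (hg : HasDerivAt g g' t)
    (hq : HasDerivAt q q' t) (hmono : ∀ᶠ s in 𝓝 t, 0 ≤ inner ℝ (g s - g t) (q s - q t)) :
    0 ≤ inner ℝ g' q' := by
  rw [hasDerivAt_iff_tendsto_slope] at hg hq
  refine ge_of_tendsto (hg.inner hq) ?_
  filter_upwards [hmono.filter_mono nhdsWithin_le_nhds] with s hs
  rw [slope_def_module, slope_def_module, real_inner_smul_left, real_inner_smul_right, ← mul_assoc]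
  exact mul_nonneg (mul_self_nonneg _) hs

-- The hypothesis puts `q` in the ball with diameter `[0, a / l]`, where `a = v - l' g`; the bound
-- estimates the minimum of `⟪·, v⟫` over that ball.
lemma neg_le_inner_of_inner_sub_smul_nonneg {q v g : H} {l l' : ℝ} (hl : 0 < l) (hl' : 0 ≤ l')
    (hq : 0 ≤ inner ℝ q (v - l' • g - l • q)) : -(l' / l * ‖g‖ * ‖v‖) ≤ inner ℝ q v := by
  set a := v - l' • g with ha
  have hball : ‖(2 * l) • q - a‖ ≤ ‖a‖ := by
    refine le_of_sq_le_sq ?_ (norm_nonneg _)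
    rw [inner_sub_right, inner_smul_right, real_inner_self_eq_norm_sq] at hq
    rw [norm_sub_sq_real, norm_smul, real_inner_smul_left, mul_pow, norm_eq_abs, sq_abs]
    nlinarith
  have hcauchy : -(‖a‖ * ‖v‖) ≤ inner ℝ ((2 * l) • q - a) v :=
    (neg_le_neg (by gcongr)).trans
      (neg_le_of_abs_le (abs_real_inner_le_norm ((2 * l) • q - a) v))
  have ha_norm : ‖a‖ ≤ ‖v‖ + l' * ‖g‖ := by
    simpa only [norm_smul, norm_of_nonneg hl'] using norm_sub_le v (l' • g)
  have ha_inner : ‖v‖ ^ 2 - l' * (‖g‖ * ‖v‖) ≤ inner ℝ a v := by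
    rw [ha, inner_sub_left, real_inner_smul_left, real_inner_self_eq_norm_sq]
    gcongr
    exact real_inner_le_norm g v
  rw [inner_sub_left, real_inner_smul_left] at hcauchy
  have hscaled : -(l' * ‖g‖ * ‖v‖) ≤ inner ℝ q v * l := by
    nlinarith [mul_le_mul_of_nonneg_right ha_norm (norm_nonneg v)]
  calc -(l' / l * ‖g‖ * ‖v‖) = -(l' * ‖g‖ * ‖v‖) / l := by ring
    _ ≤ inner ℝ q v := (div_le_iff₀ hl).2 hscaled

lemma EConvexOn.ne_top_and_toReal_le (hΦ : EConvexOn Φ) (hbot : ∀ y, Φ y ≠ ⊥) {x y : H}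
    (hx : Φ x ≠ ⊤) (hy : Φ y ≠ ⊤) {a c : ℝ} (ha : 0 ≤ a) (hc : 0 ≤ c) (hac : a + c = 1) :
    Φ (a • x + c • y) ≠ ⊤ ∧
      (Φ (a • x + c • y)).toReal ≤ a * (Φ x).toReal + c * (Φ y).toReal := by
  have hle : Φ (a • x + c • y) ≤ ((a * (Φ x).toReal + c * (Φ y).toReal : ℝ) : EReal) := by
    have h := hΦ x y a c ha hc hac
    rw [← EReal.coe_toReal hx (hbot x), ← EReal.coe_toReal hy (hbot y)] at h
    exact_mod_cast h
  have hne : Φ (a • x + c • y) ≠ ⊤ := (hle.trans_lt (EReal.coe_lt_top _)).ne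
  exact ⟨hne, EReal.toReal_le_toReal hle (hbot _) (EReal.coe_ne_top _)⟩

namespace IsProxPt

variable {l : ℝ} {x y z p : H}

lemma ne_top (hp : IsProxPt Φ l x p) (hy : Φ y ≠ ⊤) : Φ p ≠ ⊤ := by
  intro htop
  have h := hp y
  rw [htop, EReal.top_add_coe, top_le_iff] at h
  exact (EReal.add_lt_top hy (EReal.coe_ne_top _)).ne h

lemma moreau_eq (hp : IsProxPt Φ l x p) (hbot : Φ p ≠ ⊥) (htop : Φ p ≠ ⊤) :
    moreau Φ l x = (Φ p).toReal + ‖x - p‖ ^ 2 / (2 * l) := by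
  have hinf : (⨅ y, Φ y + ((‖x - y‖ ^ 2 / (2 * l) : ℝ) : EReal))
      = Φ p + ((‖x - p‖ ^ 2 / (2 * l) : ℝ) : EReal) := le_antisymm (iInf_le _ p) (le_iInf hp)
  rw [moreau, hinf, EReal.toReal_add htop hbot (EReal.coe_ne_top _) (EReal.coe_ne_bot _),
    EReal.toReal_coe]

lemma moreau_le (hp : IsProxPt Φ l x p) (hbot : ∀ y, Φ y ≠ ⊥) (hy : Φ y ≠ ⊤) :
    moreau Φ l x ≤ (Φ y).toReal + ‖x - y‖ ^ 2 / (2 * l) := by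
  have hptop := hp.ne_top hy
  have h := hp y
  rw [← EReal.coe_toReal hptop (hbot p), ← EReal.coe_toReal hy (hbot y)] at h
  rw [hp.moreau_eq (hbot p) hptop]
  exact_mod_cast h

-- Compare `p` with `p + a (y - p)`, divide by `a` and let `a → 0`.
lemma toReal_add_inner_le (hp : IsProxPt Φ l x p) (hΦ : EConvexOn Φ) (hbot : ∀ y, Φ y ≠ ⊥)
    (hy : Φ y ≠ ⊤) :
    (Φ p).toReal + inner ℝ (l⁻¹ • (x - p)) (y - p) ≤ (Φ y).toReal := by
  have hptop := hp.ne_top hy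
  have hsegment : ∀ a ∈ Ioo (0 : ℝ) 1,
      (Φ p).toReal + inner ℝ (l⁻¹ • (x - p)) (y - p) - (Φ y).toReal
        ≤ a * (‖y - p‖ ^ 2 / (2 * l)) := by
    rintro a ⟨ha0, ha1⟩
    obtain ⟨htop, hconv⟩ := hΦ.ne_top_and_toReal_le hbot hptop hy (sub_nonneg.2 ha1.le) ha0.le
      (sub_add_cancel 1 a)
    have hmin := hp.moreau_le hbot htop
    have hsub : x - ((1 - a) • p + a • y) = (x - p) - a • (y - p) := by module
    rw [hp.moreau_eq (hbot p) hptop, hsub, norm_sub_sq_real (x - p), norm_smul, mul_pow,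
      norm_eq_abs, sq_abs, real_inner_smul_right] at hmin
    rw [real_inner_smul_left]
    refine le_of_mul_le_mul_left ?_ ha0
    linear_combination hmin + hconv
  have hlim : Tendsto (fun a : ℝ => a * (‖y - p‖ ^ 2 / (2 * l))) (𝓝[>] 0) (𝓝 0) :=
    ((continuous_mul_const _).tendsto' 0 0 (zero_mul _)).mono_left nhdsWithin_le_nhds
  exact sub_nonpos.1 (ge_of_tendsto hlim
    (mem_of_superset (Ioo_mem_nhdsGT one_pos) hsegment))

lemma inner_sub_nonneg {l₁ l₂ : ℝ} {x₁ x₂ p₁ p₂ : H} (hp₁ : IsProxPt Φ l₁ x₁ p₁)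
    (hp₂ : IsProxPt Φ l₂ x₂ p₂) (hΦ : EConvexOn Φ) (hbot : ∀ y, Φ y ≠ ⊥) (hy : Φ y ≠ ⊤) :
    0 ≤ inner ℝ (l₁⁻¹ • (x₁ - p₁) - l₂⁻¹ • (x₂ - p₂)) (p₁ - p₂) := by
  have h₁ := hp₁.toReal_add_inner_le hΦ hbot (hp₂.ne_top hy)
  have h₂ := hp₂.toReal_add_inner_le hΦ hbot (hp₁.ne_top hy)
  rw [← neg_sub p₁ p₂, inner_neg_right] at h₁
  rw [inner_sub_left]
  linarith

lemma moreau_le_add_inner (hp : IsProxPt Φ l x p) (hΦ : EConvexOn Φ) (hbot : ∀ y, Φ y ≠ ⊥)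
    (hl : 0 < l) (hz : Φ z ≠ ⊤) :
    moreau Φ l x ≤ (Φ z).toReal + inner ℝ (x - z) (l⁻¹ • (x - p)) := by
  have hsubgrad := hp.toReal_add_inner_le hΦ hbot hz
  have hsplit : x - z = (x - p) - (z - p) := by abel
  have hself : inner ℝ (x - p) (l⁻¹ • (x - p)) = 2 * (‖x - p‖ ^ 2 / (2 * l)) := by
    rw [real_inner_smul_right, real_inner_self_eq_norm_sq]
    field_simp
  rw [hp.moreau_eq (hbot p) (hp.ne_top hz), hsplit, inner_sub_left, hself,
    real_inner_comm _ (z - p)]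
  have hsq : 0 ≤ ‖x - p‖ ^ 2 / (2 * l) := by positivity
  linarith

lemma add_norm_sq_le_moreau (hp : IsProxPt Φ l x p) (hbot : ∀ y, Φ y ≠ ⊥) (hl : l ≠ 0)
    (hz : Φ z ≠ ⊤) (hmin : ∀ y, Φ z ≤ Φ y) :
    (Φ z).toReal + l / 2 * ‖l⁻¹ • (x - p)‖ ^ 2 ≤ moreau Φ l x := by
  rw [hp.moreau_eq (hbot p) (hp.ne_top hz), norm_sq_div_two_mul hl]
  gcongr
  exact EReal.toReal_le_toReal (hmin p) (hbot z) (hp.ne_top hz)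

lemma norm_sub_le_norm_sub (hp : IsProxPt Φ l x p) (hbot : ∀ y, Φ y ≠ ⊥) (hl : 0 < l)
    (hz : Φ z ≠ ⊤) (hmin : ∀ y, Φ z ≤ Φ y) : ‖x - p‖ ≤ ‖x - z‖ := by
  have hle := hp.moreau_le hbot hz
  rw [hp.moreau_eq (hbot p) (hp.ne_top hz)] at hle
  have hzp := EReal.toReal_le_toReal (hmin p) (hbot z) (hp.ne_top hz)
  have hsq : ‖x - p‖ ^ 2 / (2 * l) ≤ ‖x - z‖ ^ 2 / (2 * l) := by linarith
  exact le_of_sq_le_sq ((div_le_div_iff_of_pos_right (by positivity)).1 hsq) (norm_nonneg _)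

end IsProxPt

section Curve

variable {x p : ℝ → H} {lam : ℝ → ℝ} {v g' : H} {l' t : ℝ}

lemma hasDerivAt_prox (hx : HasDerivAt x v t) (hlam : HasDerivAt lam l' t) (hlt : lam t ≠ 0)
    (hg : HasDerivAt (fun s => (lam s)⁻¹ • (x s - p s)) g' t) :
    HasDerivAt p (v - l' • (lam t)⁻¹ • (x t - p t) - lam t • g') t := by
  refine ((hx.sub (hlam.smul hg)).congr_of_eventuallyEq ?_).congr_deriv (by module)
  filter_upwards [hlam.continuousAt.eventually_ne hlt] with s hs
  simp [smul_inv_smul₀ hs]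

lemma neg_le_inner_deriv_moreau_grad (hbot : ∀ y, Φ y ≠ ⊥) (hproper : ∃ y, Φ y ≠ ⊤)
    (hΦ : EConvexOn Φ) (hp : ∀ᶠ s in 𝓝 t, IsProxPt Φ (lam s) (x s) (p s))
    (hx : HasDerivAt x v t) (hlam : HasDerivAt lam l' t) (hlt : 0 < lam t) (hl' : 0 ≤ l')
    (hg : HasDerivAt (fun s => (lam s)⁻¹ • (x s - p s)) g' t) :
    -(l' / lam t * ‖(lam t)⁻¹ • (x t - p t)‖ * ‖v‖) ≤ inner ℝ g' v := by
  obtain ⟨y, hy⟩ := hproper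
  refine neg_le_inner_of_inner_sub_smul_nonneg hlt hl'
    (inner_nonneg_of_hasDerivAt hg (hasDerivAt_prox hx hlam hlt.ne' hg) ?_)
  filter_upwards [hp] with s hs using hs.inner_sub_nonneg hp.self_of_nhds hΦ hbot hy

-- Both bounds come from testing the minimality at one of the times `s`, `t` with the proximal
-- point at the other; they have the same derivative at `t`.
lemma hasDerivAt_moreau (hbot : ∀ y, Φ y ≠ ⊥) (hproper : ∃ y, Φ y ≠ ⊤)
    (hp : ∀ᶠ s in 𝓝 t, IsProxPt Φ (lam s) (x s) (p s))
    (hx : HasDerivAt x v t) (hlam : HasDerivAt lam l' t) (hlt : lam t ≠ 0)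
    (hg : HasDerivAt (fun s => (lam s)⁻¹ • (x s - p s)) g' t) :
    HasDerivAt (fun s => moreau Φ (lam s) (x s))
      (inner ℝ ((lam t)⁻¹ • (x t - p t)) v - l' / 2 * ‖(lam t)⁻¹ • (x t - p t)‖ ^ 2) t := by
  obtain ⟨y, hy⟩ := hproper
  have hpt := hp.self_of_nhds
  have hpt_top := hpt.ne_top hy
  have hlam2 : 2 * lam t ≠ 0 := mul_ne_zero two_ne_zero hlt
  have hprox := hasDerivAt_prox hx hlam hlt hg
  have hlower := ((((hx.sub hprox).norm_sq.div (hlam.const_mul 2) hlam2).sub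
    ((hprox.const_sub (x t)).norm_sq.div_const (2 * lam t)))).const_add (moreau Φ (lam t) (x t))
  have hupper := ((hx.sub_const (p t)).norm_sq.div (hlam.const_mul 2) hlam2).const_add
    (Φ (p t)).toReal
  refine hasDerivAt_of_eventually_mem_Icc (hlower.congr_deriv ?_) (hupper.congr_deriv ?_)
    (by simp) (hpt.moreau_eq (hbot _) hpt_top).symm ?_
  · simp only [Pi.sub_apply, inner_sub_right, inner_neg_right, real_inner_smul_left,
      real_inner_smul_right, norm_smul, mul_pow, norm_eq_abs, sq_abs]
    field_simp
    ring
  · simp only [real_inner_smul_left, norm_smul, mul_pow, norm_eq_abs, sq_abs]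
    field_simp
  · filter_upwards [hp] with s hs
    have hs_le := hs.moreau_le hbot hpt_top
    have ht_le := hpt.moreau_le hbot (hs.ne_top hy)
    have hs_eq := hs.moreau_eq (hbot _) (hs.ne_top hy)
    refine ⟨?_, hs_le⟩
    simp only [Pi.sub_apply, Pi.div_apply]
    linarith

end Curve

end Prox

section InertialFlow

/-- The rescaled total energy `t² (b f + ‖v‖² / 2)` of a trajectory with gap `f` and velocity `v`;
twice it dominates the square of the quantity whose decay is claimed. -/
def mechanicalEnergy {E : Type*} [Norm E] (b f : ℝ → ℝ) (v : ℝ → E) (t : ℝ) : ℝ :=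
  t ^ 2 * b t * f t + t ^ 2 / 2 * ‖v t‖ ^ 2

lemma mechanicalEnergy_div {E : Type*} [Norm E] {b f : ℝ → ℝ} {v : ℝ → E} {t : ℝ} (ht : t ≠ 0) :
    mechanicalEnergy b f v t / t = t * b t * f t + t / 2 * ‖v t‖ ^ 2 := by
  rw [mechanicalEnergy]
  field_simp

variable {H : Type*} [NormedAddCommGroup H] [InnerProductSpace ℝ H]

/-- The weight `w = b - β' - β / t`, which enters through the term `-t w G` in the derivative of
`t • (v + β • G)` along the flow; `β'` stands for the derivative of `β`. -/
def gradWeight (β β' b : ℝ → ℝ) (t : ℝ) : ℝ :=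
  b t - β' t - β t / t

/-- The net contribution of the varying smoothing parameter `lam` to the growth of the mechanical
energy, per unit of `(lam ‖G‖)²`; `lam'` stands for the derivative of `lam`. -/
def smoothingDrift (β b lam lam' : ℝ → ℝ) (t : ℝ) : ℝ :=
  lam' t ^ 2 * t ^ 3 * β t ^ 2 / lam t ^ 4 - lam' t * t ^ 2 * b t / (2 * lam t ^ 2)

/-- At time `t`, the curve `x` with velocity `v` solves the inertial system
`x'' + (α / t) x' + β G' + b G = 0`, where `G` behaves like the gradient of a smoothed convex
function with smoothing parameter `lam` and minimizer `z`, and `f` like its gap above the minimum.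
The structure collects every property of the Moreau envelope that the energy estimates use. -/
structure IsInertialFlowAt (α : ℝ) (β β' b lam lam' f : ℝ → ℝ) (z : H) (x v G G' : ℝ → H)
    (t : ℝ) : Prop where
  time_pos : 0 < t
  damping_nonneg : 0 ≤ β t
  weight_pos : 0 < b t
  smoothing_pos : 0 < lam t
  smoothing_deriv_nonneg : 0 ≤ lam' t
  hasDerivAt_damping : HasDerivAt β (β' t) t
  hasDerivAt_position : HasDerivAt x (v t) t
  hasDerivAt_velocity : HasDerivAt v (-(α / t) • v t - β t • G' t - b t • G t) t
  hasDerivAt_grad : HasDerivAt G (G' t) t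
  hasDerivAt_gap : HasDerivAt f (inner ℝ (G t) (v t) - lam' t / 2 * ‖G t‖ ^ 2) t
  neg_le_inner_grad_deriv : -(lam' t / lam t * ‖G t‖ * ‖v t‖) ≤ inner ℝ (G' t) (v t)
  norm_sq_le_gap : lam t / 2 * ‖G t‖ ^ 2 ≤ f t
  gap_le_inner : f t ≤ inner ℝ (x t - z) (G t)
  norm_grad_le : lam t * ‖G t‖ ≤ ‖x t - z‖

/-- The Lyapunov function of the system: the weighted gap, the momentum `t • (v + β • G)` coupled to
the displacement from `z`, and that displacement itself. The parameter `d` is free; the decay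
estimate takes for it half the margin `ε` of the decay condition on `gradWeight`. -/
def lyapunovEnergy (α d : ℝ) (β β' b f : ℝ → ℝ) (z : H) (x v G : ℝ → H) (t : ℝ) : ℝ :=
  (t ^ 2 * gradWeight β β' b t + d * (t * β t)) * f t
    + 1 / 2 * ‖(α - 1 - d) • (x t - z) + t • (v t + β t • G t)‖ ^ 2
    + (α - 1 - d) * d / 2 * ‖x t - z‖ ^ 2

namespace IsInertialFlowAt

variable {α d : ℝ} {β β' b lam lam' f : ℝ → ℝ} {z : H} {x v G G' : ℝ → H} {t : ℝ}

lemma gap_nonneg (h : IsInertialFlowAt α β β' b lam lam' f z x v G G' t) : 0 ≤ f t := by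
  have hlam := h.smoothing_pos
  exact le_trans (by positivity) h.norm_sq_le_gap

lemma hasDerivAt_anchor (h : IsInertialFlowAt α β β' b lam lam' f z x v G G' t) (c : ℝ) :
    HasDerivAt (fun s => c • (x s - z) + s • (v s + β s • G s))
      ((c + 1 - α) • v t - (t * gradWeight β β' b t) • G t) t := by
  have ht := h.time_pos.ne'
  refine (((h.hasDerivAt_position.sub_const z).const_smul c).add ((hasDerivAt_id t).smul
    (h.hasDerivAt_velocity.add (h.hasDerivAt_damping.smul h.hasDerivAt_grad)))).congr_deriv ?_
  simp only [Pi.add_apply, Pi.smul_apply', id, gradWeight]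
  match_scalars <;> field_simp <;> ring

lemma hasDerivAt_lyapunovEnergy (h : IsInertialFlowAt α β β' b lam lam' f z x v G G' t) (d : ℝ)
    {w' : ℝ} (hw' : HasDerivAt (gradWeight β β' b) w' t) :
    HasDerivAt (lyapunovEnergy α d β β' b f z x v G)
      ((2 * t * gradWeight β β' b t + t ^ 2 * w' + d * (β t + t * β' t)) * f t
        - (t ^ 2 * gradWeight β β' b t + d * (t * β t)) * (lam' t / 2 * ‖G t‖ ^ 2)
        - (α - 1 - d) * (t * gradWeight β β' b t) * inner ℝ (x t - z) (G t)
        - d * (t * ‖v t‖ ^ 2)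
        - t ^ 2 * β t * gradWeight β β' b t * ‖G t‖ ^ 2) t := by
  have hcoeff := (((hasDerivAt_id t).pow 2).mul hw').add
    (((hasDerivAt_id t).mul h.hasDerivAt_damping).const_mul d)
  refine (((hcoeff.mul h.hasDerivAt_gap).add
    ((h.hasDerivAt_anchor (α - 1 - d)).norm_sq.const_mul (1 / 2))).add
    ((h.hasDerivAt_position.sub_const z).norm_sq.const_mul
      ((α - 1 - d) * d / 2))).congr_deriv ?_
  simp only [Pi.add_apply, Pi.mul_apply, Pi.pow_apply, id, inner_add_left, inner_sub_right,
    real_inner_smul_left, real_inner_smul_right, real_inner_self_eq_norm_sq,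
    real_inner_comm (v t) (G t)]
  ring

lemma hasDerivAt_mechanicalEnergy (h : IsInertialFlowAt α β β' b lam lam' f z x v G G' t)
    {b' : ℝ} (hb' : HasDerivAt b b' t) :
    HasDerivAt (mechanicalEnergy b f v)
      ((2 * t * b t + t ^ 2 * b') * f t - t ^ 2 * b t * (lam' t / 2 * ‖G t‖ ^ 2)
        - (α - 1) * (t * ‖v t‖ ^ 2) - t ^ 2 * β t * inner ℝ (G' t) (v t)) t := by
  have ht := h.time_pos.ne'
  refine (((((hasDerivAt_id t).pow 2).mul hb').mul h.hasDerivAt_gap).add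
    ((((hasDerivAt_id t).pow 2).div_const 2).mul h.hasDerivAt_velocity.norm_sq)).congr_deriv ?_
  simp only [Pi.mul_apply, Pi.pow_apply, id, inner_sub_right, real_inner_smul_right,
    real_inner_self_eq_norm_sq, real_inner_comm (v t)]
  field_simp
  ring

lemma deriv_lyapunovEnergy_le (h : IsInertialFlowAt α β β' b lam lam' f z x v G G' t)
    {w' ε : ℝ} (hw' : HasDerivAt (gradWeight β β' b) w' t) (hw : 0 ≤ gradWeight β β' b t)
    (hε : 0 < ε) (hεα : ε < α - 1)
    (hdecay : ε * b t ≤ (α - 3) * gradWeight β β' b t - t * w') :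
    deriv (lyapunovEnergy α (ε / 2) β β' b f z x v G) t
      ≤ -(ε / 2 * (mechanicalEnergy b f v t / t)) := by
  have ht := h.time_pos
  have hβ := h.damping_nonneg
  have hf := h.gap_nonneg
  have hlam' := h.smoothing_deriv_nonneg
  have hanchor : 0 ≤ (α - 1 - ε / 2) * (t * gradWeight β β' b t) :=
    mul_nonneg (by linarith) (by positivity)
  have hinner := mul_le_mul_of_nonneg_left h.gap_le_inner hanchor
  have hscaled := mul_le_mul_of_nonneg_left hdecay (mul_nonneg ht.le hf)
  have hweight : β t + t * β' t = t * (b t - gradWeight β β' b t) := by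
    rw [gradWeight]; field_simp; ring
  have hsmoothing : 0 ≤ (t ^ 2 * gradWeight β β' b t + ε / 2 * (t * β t))
      * (lam' t / 2 * ‖G t‖ ^ 2) := by positivity
  have hdamping : 0 ≤ t ^ 2 * β t * gradWeight β β' b t * ‖G t‖ ^ 2 := by positivity
  have hkinetic : 0 ≤ ε * (t * ‖v t‖ ^ 2) := by positivity
  rw [(h.hasDerivAt_lyapunovEnergy (ε / 2) hw').deriv, hweight, mechanicalEnergy_div ht.ne']
  linarith

-- Young's inequality with weights `t / 4` on `‖v‖²` and `t³ β² (lam' / lam)²` on `‖G‖²`: the latter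
-- is the positive term of the drift.
lemma cross_terms_le (h : IsInertialFlowAt α β β' b lam lam' f z x v G G' t) :
    -(t ^ 2 * b t * (lam' t / 2 * ‖G t‖ ^ 2)) - t ^ 2 * β t * inner ℝ (G' t) (v t)
      ≤ t / 4 * ‖v t‖ ^ 2 + (lam t * ‖G t‖) ^ 2 * smoothingDrift β b lam lam' t := by
  have ht := h.time_pos
  have hlam := h.smoothing_pos
  have hinner := mul_le_mul_of_nonneg_left h.neg_le_inner_grad_deriv
    (mul_nonneg (sq_nonneg t) h.damping_nonneg)
  have hyoung : 0 ≤ t * (‖v t‖ / 2 - t * β t * (lam' t / lam t) * ‖G t‖) ^ 2 := by positivity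
  have hdrift : (lam t * ‖G t‖) ^ 2 * smoothingDrift β b lam lam' t
      = t ^ 3 * β t ^ 2 * (lam' t / lam t) ^ 2 * ‖G t‖ ^ 2
        - t ^ 2 * b t * (lam' t / 2 * ‖G t‖ ^ 2) := by
    rw [smoothingDrift]
    field_simp
  linarith

lemma deriv_mechanicalEnergy_le (h : IsInertialFlowAt α β β' b lam lam' f z x v G G' t)
    {b' C : ℝ} (hb' : HasDerivAt b b' t) (hα : 1 ≤ α)
    (hgrowth : 2 * t * b t + t ^ 2 * b' ≤ C * (t * b t)) :
    deriv (mechanicalEnergy b f v) t ≤ max C 2 * (mechanicalEnergy b f v t / t)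
      + (lam t * ‖G t‖) ^ 2 * smoothingDrift β b lam lam' t := by
  have ht := h.time_pos
  have hb := h.weight_pos
  have hf := h.gap_nonneg
  have hpotential : (2 * t * b t + t ^ 2 * b') * f t ≤ max C 2 * (t * b t * f t) :=
    calc (2 * t * b t + t ^ 2 * b') * f t ≤ C * (t * b t) * f t := by gcongr
      _ = C * (t * b t * f t) := by ring
      _ ≤ max C 2 * (t * b t * f t) := by gcongr; exact le_max_left C 2
  have hkinetic : t * ‖v t‖ ^ 2 ≤ max C 2 * (t / 2 * ‖v t‖ ^ 2) :=
    calc t * ‖v t‖ ^ 2 = 2 * (t / 2 * ‖v t‖ ^ 2) := by ring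
      _ ≤ max C 2 * (t / 2 * ‖v t‖ ^ 2) := by gcongr; exact le_max_right C 2
  have hdamping : 0 ≤ (α - 1) * (t * ‖v t‖ ^ 2) :=
    mul_nonneg (sub_nonneg.2 hα) (by positivity)
  have hv : 0 ≤ t * ‖v t‖ ^ 2 := by positivity
  rw [(h.hasDerivAt_mechanicalEnergy hb').deriv, mechanicalEnergy_div ht.ne']
  linarith [h.cross_terms_le]

lemma le_lyapunovEnergy (h : IsInertialFlowAt α β β' b lam lam' f z x v G G' t)
    (hw : 0 ≤ gradWeight β β' b t) (hd : 0 ≤ d) :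
    (α - 1 - d) * d / 2 * ‖x t - z‖ ^ 2 ≤ lyapunovEnergy α d β β' b f z x v G t := by
  have ht := h.time_pos
  have hβ := h.damping_nonneg
  have hf := h.gap_nonneg
  exact le_add_of_nonneg_left (by positivity)

lemma mechanicalEnergy_nonneg (h : IsInertialFlowAt α β β' b lam lam' f z x v G G' t) :
    0 ≤ mechanicalEnergy b f v t := by
  have hb := h.weight_pos
  have hf := h.gap_nonneg
  rw [mechanicalEnergy]
  positivity

lemma mul_sqrt_mul_norm_grad_le (h : IsInertialFlowAt α β β' b lam lam' f z x v G G' t) :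
    t * √(b t * lam t) * ‖G t‖ ≤ √(2 * mechanicalEnergy b f v t) := by
  have hb := h.weight_pos
  have hlam := h.smoothing_pos
  have hgap := mul_le_mul_of_nonneg_left h.norm_sq_le_gap
    (mul_nonneg (sq_nonneg t) hb.le)
  have hkinetic : 0 ≤ t ^ 2 / 2 * ‖v t‖ ^ 2 := by positivity
  refine le_sqrt_of_sq_le ?_
  rw [mul_pow, mul_pow, sq_sqrt (by positivity), mechanicalEnergy]
  linarith

end IsInertialFlowAt

section Asymptotics

variable {α d ε C : ℝ} {β β' b b' lam lam' f w' : ℝ → ℝ} {z : H} {x v G G' : ℝ → H}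

lemma isBoundedUnder_ge_lyapunovEnergy
    (h : ∀ᶠ t in atTop, IsInertialFlowAt α β β' b lam lam' f z x v G G' t)
    (hw : ∀ᶠ t in atTop, 0 ≤ gradWeight β β' b t) (hd : 0 ≤ d) (hdα : d ≤ α - 1) :
    IsBoundedUnder (· ≥ ·) atTop (lyapunovEnergy α d β β' b f z x v G) := by
  refine isBoundedUnder_of_eventually_ge (a := 0) ?_
  filter_upwards [h, hw] with t ht hwt
  have hcoeff : 0 ≤ (α - 1 - d) * d / 2 :=
    div_nonneg (mul_nonneg (sub_nonneg.2 hdα) hd) two_pos.le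
  exact (mul_nonneg hcoeff (sq_nonneg _)).trans (ht.le_lyapunovEnergy hwt hd)

lemma exists_tendsto_lyapunovEnergy
    (h : ∀ᶠ t in atTop, IsInertialFlowAt α β β' b lam lam' f z x v G G' t)
    (hw' : ∀ᶠ t in atTop, HasDerivAt (gradWeight β β' b) (w' t) t)
    (hw : ∀ᶠ t in atTop, 0 ≤ gradWeight β β' b t) (hε : 0 < ε) (hεα : ε < α - 1)
    (hdecay : ∀ᶠ t in atTop, ε * b t ≤ (α - 3) * gradWeight β β' b t - t * w' t) :
    ∃ e, Tendsto (lyapunovEnergy α (ε / 2) β β' b f z x v G) atTop (𝓝 e) := by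
  refine exists_tendsto_of_deriv_nonpos ?_ ?_
    (isBoundedUnder_ge_lyapunovEnergy h hw (by linarith) (by linarith))
  · filter_upwards [h, hw'] with t ht hw't
      using (ht.hasDerivAt_lyapunovEnergy _ hw't).differentiableAt
  · filter_upwards [h, hw', hw, hdecay] with t ht hw't hwt hdecayt
    have ht_pos := ht.time_pos
    have henergy := ht.mechanicalEnergy_nonneg
    exact (ht.deriv_lyapunovEnergy_le hw't hwt hε hεα hdecayt).trans
      (neg_nonpos.2 (by positivity))

lemma exists_eventually_norm_grad_sq_le
    (h : ∀ᶠ t in atTop, IsInertialFlowAt α β β' b lam lam' f z x v G G' t)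
    (hw' : ∀ᶠ t in atTop, HasDerivAt (gradWeight β β' b) (w' t) t)
    (hw : ∀ᶠ t in atTop, 0 ≤ gradWeight β β' b t) (hε : 0 < ε) (hεα : ε < α - 1)
    (hdecay : ∀ᶠ t in atTop, ε * b t ≤ (α - 3) * gradWeight β β' b t - t * w' t) :
    ∃ M, ∀ᶠ t in atTop, (lam t * ‖G t‖) ^ 2 ≤ M := by
  obtain ⟨e, he⟩ := exists_tendsto_lyapunovEnergy h hw' hw hε hεα hdecay
  have hc : 0 < (α - 1 - ε / 2) * (ε / 2) / 2 :=
    half_pos (mul_pos (by linarith) (half_pos hε))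
  refine ⟨(e + 1) / ((α - 1 - ε / 2) * (ε / 2) / 2), ?_⟩
  filter_upwards [h, hw, he.eventually_le_const (lt_add_one e)] with t ht hwt hle
  have hlam := ht.smoothing_pos
  calc (lam t * ‖G t‖) ^ 2 ≤ ‖x t - z‖ ^ 2 := by gcongr; exact ht.norm_grad_le
    _ ≤ (e + 1) / ((α - 1 - ε / 2) * (ε / 2) / 2) :=
      (le_div_iff₀' hc).2 ((ht.le_lyapunovEnergy hwt (half_pos hε).le).trans hle)

lemma tendsto_mechanicalEnergy_zero
    (h : ∀ᶠ t in atTop, IsInertialFlowAt α β β' b lam lam' f z x v G G' t)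
    (hb' : ∀ᶠ t in atTop, HasDerivAt b (b' t) t)
    (hw' : ∀ᶠ t in atTop, HasDerivAt (gradWeight β β' b) (w' t) t)
    (hw : ∀ᶠ t in atTop, 0 ≤ gradWeight β β' b t) (hε : 0 < ε) (hεα : ε < α - 1)
    (hdecay : ∀ᶠ t in atTop, ε * b t ≤ (α - 3) * gradWeight β β' b t - t * w' t)
    (hgrowth : ∀ᶠ t in atTop, 2 * t * b t + t ^ 2 * b' t ≤ C * (t * b t))
    (hdrift : IntegrableAtFilter (fun t => max (smoothingDrift β b lam lam' t) 0) atTop) :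
    Tendsto (mechanicalEnergy b f v) atTop (𝓝 0) := by
  obtain ⟨M, hM⟩ := exists_eventually_norm_grad_sq_le h hw' hw hε hεα hdecay
  refine tendsto_zero_of_deriv_le_div (E := lyapunovEnergy α (ε / 2) β β' b f z x v G)
    (K := max C 2) (φ := fun t => M * max (smoothingDrift β b lam lam' t) 0)
    (half_pos hε) (by positivity) ?_ ?_
    (isBoundedUnder_ge_lyapunovEnergy h hw (by linarith) (by linarith)) ?_
    (hdrift.smul M) ?_ ?_
  · filter_upwards [h, hw'] with t ht hw't
      using (ht.hasDerivAt_lyapunovEnergy _ hw't).differentiableAt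
  · filter_upwards [h, hb'] with t ht hb't
      using (ht.hasDerivAt_mechanicalEnergy hb't).differentiableAt
  · filter_upwards [h] with t ht using ht.mechanicalEnergy_nonneg
  · filter_upwards [h, hw', hw, hdecay] with t ht hw't hwt hdecayt
      using ht.deriv_lyapunovEnergy_le hw't hwt hε hεα hdecayt
  · filter_upwards [h, hb', hgrowth, hM] with t ht hb't hgrowtht hMt
    refine (ht.deriv_mechanicalEnergy_le hb't (by linarith) hgrowtht).trans ?_
    exact add_le_add le_rfl ((mul_le_mul_of_nonneg_left (le_max_left _ 0) (sq_nonneg _)).trans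
      (mul_le_mul_of_nonneg_right hMt (le_max_right _ 0)))

lemma tendsto_mul_sqrt_mul_norm_grad
    (h : ∀ᶠ t in atTop, IsInertialFlowAt α β β' b lam lam' f z x v G G' t)
    (hF : Tendsto (mechanicalEnergy b f v) atTop (𝓝 0)) :
    Tendsto (fun t => t * √(b t * lam t) * ‖G t‖) atTop (𝓝 0) := by
  have hsqrt : Tendsto (fun t => √(2 * mechanicalEnergy b f v t)) atTop (𝓝 0) := by
    simpa using (hF.const_mul 2).sqrt
  refine squeeze_zero' ?_ ?_ hsqrt
  · filter_upwards [eventually_ge_atTop 0] with t ht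
    positivity
  · filter_upwards [h] with t ht using ht.mul_sqrt_mul_norm_grad_le

end Asymptotics

end InertialFlow

lemma aemeasurable_smoothingDrift {β b lam lam' : ℝ → ℝ} {s : Set ℝ} (hs : MeasurableSet s)
    (hβ : ContinuousOn β s) (hb : ContinuousOn b s)
    (hlam : ∀ t ∈ s, HasDerivAt lam (lam' t) t) :
    AEMeasurable (smoothingDrift β b lam lam') (volume.restrict s) := by
  have hβm := hβ.aemeasurable (μ := volume) hs
  have hbm := hb.aemeasurable (μ := volume) hs
  have hlamm := (HasDerivAt.continuousOn hlam).aemeasurable (μ := volume) hs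
  have hlamm' := aemeasurable_of_hasDerivAt hs hlam
  unfold smoothingDrift
  fun_prop

section Moreau

variable {H : Type*} [NormedAddCommGroup H] [InnerProductSpace ℝ H] {Φ : H → EReal}

lemma isInertialFlowAt_moreau {α t : ℝ} {β β' b lam lam' : ℝ → ℝ} {z : H} {x v p G' : ℝ → H}
    {acc : H} (hbot : ∀ y, Φ y ≠ ⊥) (hΦ : EConvexOn Φ) (hz : Φ z ≠ ⊤) (hmin : ∀ y, Φ z ≤ Φ y)
    (ht : 0 < t) (hβ : 0 ≤ β t) (hb : 0 < b t) (hlam : 0 < lam t) (hlam0 : 0 ≤ lam' t)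
    (hβ' : HasDerivAt β (β' t) t) (hlam' : HasDerivAt lam (lam' t) t)
    (hx : HasDerivAt x (v t) t) (hv : HasDerivAt v acc t)
    (hp : ∀ᶠ s in 𝓝 t, IsProxPt Φ (lam s) (x s) (p s))
    (hG' : HasDerivAt (fun s => (lam s)⁻¹ • (x s - p s)) (G' t) t)
    (hode : acc + (α / t) • v t + β t • G' t + b t • ((lam t)⁻¹ • (x t - p t)) = 0) :
    IsInertialFlowAt α β β' b lam lam' (fun s => moreau Φ (lam s) (x s) - (Φ z).toReal) z x v
      (fun s => (lam s)⁻¹ • (x s - p s)) G' t where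
  time_pos := ht
  damping_nonneg := hβ
  weight_pos := hb
  smoothing_pos := hlam
  smoothing_deriv_nonneg := hlam0
  hasDerivAt_damping := hβ'
  hasDerivAt_position := hx
  hasDerivAt_velocity := hv.congr_deriv (by rw [← sub_eq_zero, ← hode]; module)
  hasDerivAt_grad := hG'
  hasDerivAt_gap := (hasDerivAt_moreau hbot ⟨z, hz⟩ hp hx hlam' hlam.ne' hG').sub_const _
  neg_le_inner_grad_deriv :=
    neg_le_inner_deriv_moreau_grad hbot ⟨z, hz⟩ hΦ hp hx hlam' hlam hlam0 hG'
  norm_sq_le_gap :=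
    le_sub_iff_add_le'.2 (hp.self_of_nhds.add_norm_sq_le_moreau hbot hlam.ne' hz hmin)
  gap_le_inner := sub_le_iff_le_add'.2 (hp.self_of_nhds.moreau_le_add_inner hΦ hbot hlam hz)
  norm_grad_le := by
    rw [norm_smul, norm_inv, norm_of_nonneg hlam.le, mul_inv_cancel_left₀ hlam.ne']
    exact hp.self_of_nhds.norm_sub_le_norm_sub hbot hlam hz hmin

end Moreau

theorem moreau_gradient_little_o_general
    {H : Type*} [NormedAddCommGroup H] [InnerProductSpace ℝ H]
    {Φ : H → EReal}
    (hΦbot : ∀ y, Φ y ≠ ⊥) (hΦproper : ∃ y, Φ y ≠ ⊤)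
    (hΦconv : EConvexOn Φ)
    {t₀ α : ℝ} (ht₀ : 0 < t₀)
    {β b lam β' b' lam' w' : ℝ → ℝ}
    (hβnonneg : ∀ t ≥ t₀, 0 ≤ β t)
    (hbpos : ∀ t ≥ t₀, 0 < b t)
    (hlampos : ∀ t ≥ t₀, 0 < lam t)
    (hβ' : ∀ t ≥ t₀, HasDerivAt β (β' t) t)
    (hb' : ∀ t ≥ t₀, HasDerivAt b (b' t) t)
    (hlam' : ∀ t ≥ t₀, HasDerivAt lam (lam' t) t)
    (hw' : ∀ t ≥ t₀, HasDerivAt (gradWeight β β' b) (w' t) t)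
    {x v acc p G' : ℝ → H}
    (hx : ∀ t ≥ t₀, HasDerivAt x (v t) t)
    (hv : ∀ t ≥ t₀, HasDerivAt v (acc t) t)
    (hp : ∀ t ≥ t₀, IsProxPt Φ (lam t) (x t) (p t))
    (hG' : ∀ t ≥ t₀, HasDerivAt (fun s => (lam s)⁻¹ • (x s - p s)) (G' t) t)
    (hode : ∀ t ≥ t₀, acc t + (α / t) • v t + β t • G' t
        + b t • ((lam t)⁻¹ • (x t - p t)) = 0)
    (hlammono : MonotoneOn lam (Ici t₀))
    (hw : ∀ t ≥ t₀, 0 ≤ gradWeight β β' b t)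
    (hAs2 : ∃ ε, 0 < ε ∧ ε < α - 1 ∧
      ∀ t ≥ t₀, ε * b t ≤ (α - 3) * gradWeight β β' b t - t * w' t)
    (hAs4 : ∫⁻ t in Ici t₀, ENNReal.ofReal (smoothingDrift β b lam lam' t) < ⊤)
    (hAs : ∃ C : ℝ, ∀ t ≥ t₀, 2 * t * b t + t ^ 2 * b' t ≤ C * (t * b t))
    (hargmin : ∃ z, ∀ y, Φ z ≤ Φ y) :
    Tendsto (fun t => t * √(b t * lam t) * ‖(lam t)⁻¹ • (x t - p t)‖) atTop (𝓝 0) := by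
  obtain ⟨z, hmin⟩ := hargmin
  obtain ⟨y, hy⟩ := hΦproper
  obtain ⟨ε, hε, hεα, hdecay⟩ := hAs2
  obtain ⟨C, hgrowth⟩ := hAs
  have hflow : ∀ᶠ t in atTop, IsInertialFlowAt α β β' b lam lam'
      (fun s => moreau Φ (lam s) (x s) - (Φ z).toReal) z x v
      (fun s => (lam s)⁻¹ • (x s - p s)) G' t := by
    filter_upwards [eventually_gt_atTop t₀] with t ht
    have hlam0 : 0 ≤ lam' t := by
      rw [← (hlam' t ht.le).hasDerivWithinAt.derivWithin (uniqueDiffOn_Ici t₀ t ht.le)]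
      exact hlammono.derivWithin_nonneg
    exact isInertialFlowAt_moreau hΦbot hΦconv (ne_top_of_le_ne_top hy (hmin y)) hmin
      (ht₀.trans ht) (hβnonneg t ht.le) (hbpos t ht.le) (hlampos t ht.le) hlam0 (hβ' t ht.le)
      (hlam' t ht.le) (hx t ht.le) (hv t ht.le) (mem_of_superset (Ici_mem_nhds ht) hp)
      (hG' t ht.le) (hode t ht.le)
  have hdrift : IntegrableAtFilter (fun t => max (smoothingDrift β b lam lam' t) 0) atTop :=
    ⟨Ici t₀, Ici_mem_atTop t₀, integrable_max_zero_of_lintegral_ofReal_lt_top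
      (aemeasurable_smoothingDrift measurableSet_Ici (HasDerivAt.continuousOn hβ')
        (HasDerivAt.continuousOn hb') hlam') hAs4⟩
  have hlate := eventually_ge_atTop t₀
  exact tendsto_mul_sqrt_mul_norm_grad hflow (tendsto_mechanicalEnergy_zero hflow
    (hlate.mono hb') (hlate.mono hw') (hlate.mono hw) hε hεα (hlate.mono hdecay)
    (hlate.mono hgrowth) hdrift)

theorem moreau_gradient_little_o
    {H : Type*} [NormedAddCommGroup H] [InnerProductSpace ℝ H] [CompleteSpace H]
    (Φ : H → EReal)
    (hΦbot : ∀ y, Φ y ≠ ⊥) (hΦproper : ∃ y, Φ y ≠ ⊤)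
    (hΦconv : EConvexOn Φ) (hΦlsc : LowerSemicontinuous Φ)
    (t₀ α : ℝ) (ht₀ : 0 < t₀)
    (β b lam β' b' lam' w' : ℝ → ℝ)
    (hβnonneg : ∀ t ≥ t₀, 0 ≤ β t)
    (hbpos : ∀ t ≥ t₀, 0 < b t)
    (hlampos : ∀ t ≥ t₀, 0 < lam t)
    (hβ' : ∀ t ≥ t₀, HasDerivAt β (β' t) t)
    (hb' : ∀ t ≥ t₀, HasDerivAt b (b' t) t)
    (hlam' : ∀ t ≥ t₀, HasDerivAt lam (lam' t) t)
    (hw' : ∀ t ≥ t₀, HasDerivAt (fun s => b s - β' s - β s / s) (w' t) t)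
    (x v acc p G' : ℝ → H)
    (hx : ∀ t ≥ t₀, HasDerivAt x (v t) t)
    (hv : ∀ t ≥ t₀, HasDerivAt v (acc t) t)
    (hp : ∀ t ≥ t₀, IsProxPt Φ (lam t) (x t) (p t))
    (hG' : ∀ t ≥ t₀, HasDerivAt (fun s => (lam s)⁻¹ • (x s - p s)) (G' t) t)
    (hode : ∀ t ≥ t₀, acc t + (α / t) • v t + β t • G' t
        + b t • ((lam t)⁻¹ • (x t - p t)) = 0)
    (hα : 1 < α)
    (hlammono : MonotoneOn lam (Set.Ici t₀))
    (hβmono : MonotoneOn β (Set.Ici t₀))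
    (hw : ∀ t ≥ t₀, β' t + β t / t < b t)
    (hAs2 : ∃ ε, 0 < ε ∧ ε < α - 1 ∧
      ∀ t ≥ t₀, ε * b t ≤ (α - 3) * (b t - β' t - β t / t) - t * w' t)
    (hAs4 : ∫⁻ t in Set.Ici t₀, ENNReal.ofReal ((lam' t) ^ 2 * t ^ 3 * (β t) ^ 2 / (lam t) ^ 4
      - lam' t * t ^ 2 * b t / (2 * (lam t) ^ 2)) < ⊤)
    (hAs : ∃ C > (0 : ℝ), ∀ t ≥ t₀, 2 * t * b t + t ^ 2 * b' t ≤ C * (t * b t))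
    (hargmin : ∃ z, ∀ y, Φ z ≤ Φ y)
    :
    Filter.Tendsto (fun t => t * Real.sqrt (b t * lam t) * ‖(lam t)⁻¹ • (x t - p t)‖)
      Filter.atTop (nhds 0) := by
  have hw_nonneg : ∀ t ≥ t₀, 0 ≤ gradWeight β β' b t := fun t ht => by
    rw [gradWeight]; linarith [hw t ht]
  exact moreau_gradient_little_o_general hΦbot hΦproper hΦconv ht₀ hβnonneg hbpos hlampos hβ' hb'
    hlam' hw' hx hv hp hG' hode hlammono hw_nonneg hAs2 hAs4 (hAs.imp fun _ hC => hC.2) hargmin
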